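/- Let k ≥ 3 be odd and let C_k be the undirected cycle on the vertex set Z_k, whose edge relation consists of all pairs (u, v) with v = u + 1 (mod k) or v = u − 1 (mod k). For u, v ∈ Z_k, consider all sequences z_1, z_2, …, z_{k−1} of elements of Z_k with z_1 = u and z_{k−1} = v, and for each such sequence count the number of indices 1 ≤ i ≤ k−2 for which (z_i, z_{i+1}) is an edge of C_k. Then the maximum of this count over all such sequences equals k−2 if u ≠ v, and equals k−3 if u = v. -/

import Mathlib

/-- In the undirected cycle `C_k` on `Z_k` (`k ≥ 3` odd, edges `(u, v)` with
`v = u ± 1 (mod k)`), the maximum, over all walks `z_1, …, z_{k-1}` with `z_1 = u`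
and `z_{k-1} = v`, of the number of indices `1 ≤ i ≤ k-2` with `(z_i, z_{i+1})`
an edge, equals `k-2` if `u ≠ v` and `k-3` if `u = v`. -/
theorem stmt_11 (k : ℕ) (hk : 3 ≤ k) (hodd : Odd k) (u v : ZMod k) :
    IsGreatest
      {c : ℕ | ∃ z : Fin (k - 1) → ZMod k,
        z ⟨0, by omega⟩ = u ∧ z ⟨k - 2, by omega⟩ = v ∧
        c = (Finset.univ.filter fun i : Fin (k - 2) =>
              z ⟨i.1 + 1, by have := i.isLt; omega⟩ =
                  z ⟨i.1, by have := i.isLt; omega⟩ + 1 ∨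
              z ⟨i.1 + 1, by have := i.isLt; omega⟩ =
                  z ⟨i.1, by have := i.isLt; omega⟩ - 1).card}
      (if u ≠ v then k - 2 else k - 3) := by
  have : NeZero k := ⟨by omega⟩
  have : Fact (1 < k) := ⟨by omega⟩
  constructor
  · by_cases huv : u = v
    · subst huv
      rw [if_neg (by simp)]
      refine ⟨fun i => if i.1 = 0 ∨ i.1 % 2 = 1 then u else u + 1, by simp, ?_, ?_⟩
      · obtain ⟨m, rfl⟩ := hodd
        exact if_pos (Or.inr (by show (2 * m + 1 - 2) % 2 = 1; omega))
      · have h0 : (0 : ℕ) < k - 2 := by omega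
        have hset : (Finset.univ.erase (⟨0, h0⟩ : Fin (k - 2))).card = k - 3 := by
          rw [Finset.card_erase_of_mem (Finset.mem_univ _), Finset.card_univ, Fintype.card_fin]
          omega
        rw [← hset]
        congr 1
        ext ⟨i, hi⟩
        simp only [Finset.mem_erase, Finset.mem_univ, Finset.mem_filter, and_true, true_and,
          ne_eq, Fin.mk.injEq]
        constructor
        · intro hne
          rcases Nat.mod_two_eq_zero_or_one i with h | h
          · right
            rw [if_pos (by omega), if_neg (by omega)]
            ring
          · left
            rw [if_neg (by omega), if_pos (by omega)]
        · intro h hi0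
          subst hi0
          simp at h
          rw [eq_sub_iff_add_eq] at h
          simp at h
    · rw [if_pos huv]
      obtain ⟨a, hak, ha⟩ : ∃ a : ℕ, a ≤ k - 2 ∧ u + 2 * a + 2 = v := by
        have hd : ((v - u).val : ZMod k) = v - u := ZMod.natCast_zmod_val _
        have hpos : (v - u).val ≠ 0 := by
          rw [Ne, ZMod.val_eq_zero, sub_eq_zero]
          exact fun h => huv h.symm
        have hlt := ZMod.val_lt (v - u)
        obtain ⟨m, hm⟩ := hodd
        have key : ∃ a : ℕ, 2 * a + 2 = (v - u).val ∨ 2 * a + 2 = (v - u).val + k := by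
          rcases Nat.mod_two_eq_zero_or_one (v - u).val with h | h
          · exact ⟨((v - u).val - 2) / 2, Or.inl (by omega)⟩
          · exact ⟨((v - u).val + k - 2) / 2, Or.inr (by omega)⟩
        obtain ⟨a, h | h⟩ := key
        · refine ⟨a, by omega, ?_⟩
          have h2 := congrArg (Nat.cast : ℕ → ZMod k) h
          push_cast at h2
          rw [hd] at h2
          linear_combination h2
        · refine ⟨a, by omega, ?_⟩
          have h2 := congrArg (Nat.cast : ℕ → ZMod k) h
          push_cast at h2
          rw [hd, ZMod.natCast_self] at h2
          linear_combination h2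
      refine ⟨fun i => if i.1 ≤ a then u + (i.1 : ZMod k) else u + 2 * a - (i.1 : ZMod k),
        by simp, ?_, ?_⟩
      · have hc : ((k - 2 : ℕ) : ZMod k) = -2 := by
          rw [Nat.cast_sub (by omega), ZMod.natCast_self]; simp
        show (if k - 2 ≤ a then u + ((k - 2 : ℕ) : ZMod k)
          else u + 2 * a - ((k - 2 : ℕ) : ZMod k)) = v
        split_ifs with h
        · have hka : a = k - 2 := by omega
          rw [← hka] at hc ⊢
          linear_combination ha - hc
        · rw [hc]
          linear_combination ha
      · rw [Finset.filter_true_of_mem]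
        · simp
        rintro ⟨i, hi⟩ -
        dsimp only
        rcases lt_trichotomy i a with h | h | h
        · left
          rw [if_pos (by omega), if_pos (by omega)]
          push_cast; ring
        · right
          rw [if_neg (by omega), if_pos (by omega), h]
          push_cast; ring
        · right
          rw [if_neg (by omega), if_neg (by omega)]
          push_cast; ring
  · rintro c ⟨z, hz0, hz1, rfl⟩
    split_ifs with huv
    · exact (Finset.card_le_univ _).trans (by simp)
    · have huv : u = v := by simpa using huv
      by_contra hlt
      push Not at hlt
      have hall := Finset.card_filter_eq_iff.mp (le_antisymm (Finset.card_filter_le _ _)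
        (le_trans (by rw [Finset.card_univ, Fintype.card_fin]; omega) (Nat.succ_le_of_lt hlt)))
      have key : ∀ i : ℕ, ∀ hi : i < k - 1, ∃ s : ℤ, z ⟨i, hi⟩ = u + s ∧ |s| ≤ i ∧
          s % 2 = (i : ℤ) % 2 := by
        intro i
        induction i with
        | zero => exact fun hi => ⟨0, by simpa using hz0, by simp, by simp⟩
        | succ n ih =>
          intro hi
          obtain ⟨s, h1, h2, h3⟩ := ih (by omega)
          rw [abs_le] at h2
          rcases hall ⟨n, by omega⟩ (Finset.mem_univ _) with h | h
          · refine ⟨s + 1, ?_, ?_, ?_⟩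
            · rw [h, h1]; push_cast; ring
            · rw [abs_le]; push_cast; omega
            · push_cast; omega
          · refine ⟨s - 1, ?_, ?_, ?_⟩
            · rw [h, h1]; push_cast; ring
            · rw [abs_le]; push_cast; omega
            · push_cast; omega
      obtain ⟨s, h1, h2, h3⟩ := key (k - 2) (by omega)
      rw [hz1, huv] at h1
      have hs : (s : ZMod k) = 0 := by linear_combination -h1
      rw [ZMod.intCast_zmod_eq_zero_iff_dvd] at hs
      have h4 : s = 0 := Int.eq_zero_of_abs_lt_dvd hs (by omega)
      obtain ⟨m, hm⟩ := hodd
      omega
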